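/- For m ∈ (−1, 0] define ψ(m) := (7 + m)K(m) − 6E(m). Then ψ(m) = ∫₀^{π/2} (1 + m(1 + 6 sin²θ)) (1 − m sin²θ)^{−1/2} dθ, ψ is strictly increasing on (−1, 0), ψ(0) = π/2 > 0, ψ(−1) := −6∫₀^{π/2} sin²θ (1 + sin²θ)^{−1/2} dθ < 0, and ψ has a unique zero m̄ in the interval (−1, 0). -/

import Mathlib

open Real

/-- Complete elliptic integral of the first kind (parameter `m`). -/
noncomputable def Kc (m : ℝ) : ℝ := ∫ θ in (0:ℝ)..(π / 2), 1 / Real.sqrt (1 - m * Real.sin θ ^ 2)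

/-- Complete elliptic integral of the second kind (parameter `m`). -/
noncomputable def Ec (m : ℝ) : ℝ := ∫ θ in (0:ℝ)..(π / 2), Real.sqrt (1 - m * Real.sin θ ^ 2)

/-- `ψ(m) = (7 + m)K(m) − 6E(m)`. -/
noncomputable def psi (m : ℝ) : ℝ := (7 + m) * Kc m - 6 * Ec m

/-!
With `s = sin² θ`, `ψ(m)` is the integral over `θ` of the algebraic function
`(1 + m (1 + 6 s)) / √(1 - m s)`. For `0 ≤ s ≤ 1` this function of `m` is strictly increasing on all
of `m < 1`: `1 / √(1 - m s)` is nondecreasing, and `m / √(1 - m s)` is strictly increasing even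
where `m` is negative. Hence `ψ` is strictly increasing on the whole domain `m < 1` of the elliptic
integrals, and its sign change between `-1` and `0` gives its only zero there.
-/

theorem strictMonoOn_div_sqrt_one_sub_mul (s : ℝ) :
    StrictMonoOn (fun m : ℝ => m / √(1 - m * s)) {m | m * s < 1} := by
  intro a (ha : a * s < 1) b (hb : b * s < 1) hab
  have ha' : 0 < 1 - a * s := sub_pos.mpr ha
  have hb' : 0 < 1 - b * s := sub_pos.mpr hb
  have hu := sqrt_pos.mpr ha'
  have hv := sqrt_pos.mpr hb'
  -- Rationalizing the difference avoids a case split on the signs of `a` and `b`.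
  have hfactor : (b * √(1 - a * s) - a * √(1 - b * s)) * (√(1 - a * s) + √(1 - b * s)) =
      (b - a) * (1 + √(1 - a * s) * √(1 - b * s)) := by
    linear_combination b * sq_sqrt ha'.le - a * sq_sqrt hb'.le
  have hpos : 0 < b * √(1 - a * s) - a * √(1 - b * s) :=
    pos_of_mul_pos_left (hfactor ▸ mul_pos (sub_pos.mpr hab) (by positivity)) (by positivity)
  exact (div_lt_div_iff₀ hu hv).mpr (sub_pos.mp hpos)

theorem monotoneOn_one_div_sqrt_one_sub_mul {s : ℝ} (hs : 0 ≤ s) :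
    MonotoneOn (fun m : ℝ => 1 / √(1 - m * s)) {m | m * s < 1} := by
  intro a _ b (hb : b * s < 1) hab
  exact one_div_le_one_div_of_le (sqrt_pos.mpr (sub_pos.mpr hb)) (by gcongr)

theorem strictMonoOn_add_mul_div_sqrt_one_sub_mul {s p q : ℝ} (hp : 0 ≤ p) (hq : 0 < q)
    (hs : 0 ≤ s) :
    StrictMonoOn (fun m : ℝ => (p + m * q) / √(1 - m * s)) {m | m * s < 1} := by
  intro a ha b hb hab
  calc (p + a * q) / √(1 - a * s)
      = p * (1 / √(1 - a * s)) + q * (a / √(1 - a * s)) := by ring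
    _ < p * (1 / √(1 - b * s)) + q * (b / √(1 - b * s)) :=
        add_lt_add_of_le_of_lt
          (mul_le_mul_of_nonneg_left (monotoneOn_one_div_sqrt_one_sub_mul hs ha hb hab.le) hp)
          (mul_lt_mul_of_pos_left (strictMonoOn_div_sqrt_one_sub_mul s ha hb hab) hq)
    _ = (p + b * q) / √(1 - b * s) := by ring

theorem strictMonoOn_intervalIntegral {ι : Type*} [Preorder ι] {f : ι → ℝ → ℝ} {S : Set ι}
    {a b : ℝ} (hab : a < b)
    (hcont : ∀ m ∈ S, ContinuousOn (f m) (Set.Icc a b))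
    (hmono : ∀ θ ∈ Set.Icc a b, StrictMonoOn (fun m => f m θ) S) :
    StrictMonoOn (fun m => ∫ θ in a..b, f m θ) S := by
  intro m hm n hn hmn
  exact intervalIntegral.integral_lt_integral_of_continuousOn_of_le_of_exists_lt hab
    (hcont m hm) (hcont n hn)
    (fun θ hθ => (hmono θ (Set.Ioc_subset_Icc_self hθ) hm hn hmn).le)
    ⟨a, Set.left_mem_Icc.mpr hab.le, hmono a (Set.left_mem_Icc.mpr hab.le) hm hn hmn⟩

section EllipticIntegrand

variable {m : ℝ}

theorem mul_sin_sq_lt_one (hm : m < 1) (θ : ℝ) : m * sin θ ^ 2 < 1 := by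
  rcases le_total m 0 with hneg | hnonneg
  · exact (mul_nonpos_of_nonpos_of_nonneg hneg (sq_nonneg _)).trans_lt one_pos
  · exact (mul_le_of_le_one_right hnonneg (sin_sq_le_one θ)).trans_lt hm

theorem sqrt_one_sub_mul_sin_sq_pos (hm : m < 1) (θ : ℝ) : 0 < √(1 - m * sin θ ^ 2) :=
  sqrt_pos.mpr (sub_pos.mpr (mul_sin_sq_lt_one hm θ))

theorem continuous_div_sqrt_one_sub_mul_sin_sq {f : ℝ → ℝ} (hf : Continuous f) (hm : m < 1) :
    Continuous fun θ => f θ / √(1 - m * sin θ ^ 2) :=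
  hf.div (by fun_prop) fun θ => (sqrt_one_sub_mul_sin_sq_pos hm θ).ne'

theorem continuousOn_integral_div_sqrt_one_sub_mul_sin_sq {f : ℝ → ℝ → ℝ}
    (hf : Continuous f.uncurry) (a b : ℝ) :
    ContinuousOn (fun m => ∫ θ in a..b, f m θ / √(1 - m * sin θ ^ 2)) (Set.Iio 1) := by
  rw [continuousOn_iff_continuous_domRestrict]
  refine intervalIntegral.continuous_parametric_intervalIntegral_of_continuous'
    (f := fun (m : Set.Iio (1 : ℝ)) θ => f m θ / √(1 - m * sin θ ^ 2)) ?_ a b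
  exact (hf.comp (by fun_prop : Continuous fun x : Set.Iio (1 : ℝ) × ℝ => ((x.1 : ℝ), x.2))).div
    (by fun_prop) fun x => (sqrt_one_sub_mul_sin_sq_pos x.1.2 x.2).ne'

end EllipticIntegrand

theorem psi_eq_integral {m : ℝ} (hm : m < 1) :
    psi m = ∫ θ in (0 : ℝ)..(π / 2),
      (1 + m * (1 + 6 * sin θ ^ 2)) / √(1 - m * sin θ ^ 2) := by
  have hK : Continuous fun θ => 1 / √(1 - m * sin θ ^ 2) :=
    continuous_div_sqrt_one_sub_mul_sin_sq continuous_const hm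
  have hE : Continuous fun θ => √(1 - m * sin θ ^ 2) := by fun_prop
  calc psi m = ∫ θ in (0 : ℝ)..(π / 2),
        ((7 + m) * (1 / √(1 - m * sin θ ^ 2)) - 6 * √(1 - m * sin θ ^ 2)) := by
        rw [intervalIntegral.integral_sub ((hK.const_mul _).intervalIntegrable _ _)
          ((hE.const_mul _).intervalIntegrable _ _), intervalIntegral.integral_const_mul,
          intervalIntegral.integral_const_mul, psi, Kc, Ec]
    _ = _ := intervalIntegral.integral_congr fun θ _ => by
        have hpos := sqrt_one_sub_mul_sin_sq_pos hm θ
        have hsq := sq_sqrt (sqrt_pos.mp hpos).le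
        field_simp
        linear_combination -6 * hsq

theorem strictMonoOn_psi : StrictMonoOn psi (Set.Iio 1) := by
  refine (strictMonoOn_intervalIntegral (by positivity) (fun m hm => ?_) fun θ _ => ?_).congr
    fun m hm => (psi_eq_integral hm).symm
  · exact (continuous_div_sqrt_one_sub_mul_sin_sq (by fun_prop) hm).continuousOn
  · exact (strictMonoOn_add_mul_div_sqrt_one_sub_mul zero_le_one (by positivity)
      (sq_nonneg (sin θ))).mono fun m hm => mul_sin_sq_lt_one hm θ

theorem continuousOn_psi : ContinuousOn psi (Set.Iio 1) :=
  (continuousOn_integral_div_sqrt_one_sub_mul_sin_sq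
    (f := fun m θ => 1 + m * (1 + 6 * sin θ ^ 2)) (by fun_prop) 0 (π / 2)).congr
    fun _ hm => psi_eq_integral hm

theorem psi_zero : psi 0 = π / 2 := by
  simp [psi_eq_integral zero_lt_one]

theorem psi_neg_one :
    psi (-1) = -6 * ∫ θ in (0 : ℝ)..(π / 2), sin θ ^ 2 / √(1 + sin θ ^ 2) := by
  rw [psi_eq_integral (by norm_num), ← intervalIntegral.integral_const_mul]
  congr! 2
  ring_nf

theorem integral_sin_sq_div_sqrt_one_add_sin_sq_pos :
    0 < ∫ θ in (0 : ℝ)..(π / 2), sin θ ^ 2 / √(1 + sin θ ^ 2) := by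
  have hcont : Continuous fun θ => sin θ ^ 2 / √(1 + sin θ ^ 2) :=
    Continuous.div (by fun_prop) (by fun_prop) fun _ => by positivity
  refine intervalIntegral.intervalIntegral_pos_of_pos_on (hcont.intervalIntegrable _ _)
    (fun θ hθ => ?_) (by positivity)
  have hsin : 0 < sin θ := sin_pos_of_pos_of_lt_pi hθ.1 (by linarith [hθ.2, pi_pos])
  positivity

theorem psi_neg_one_neg : psi (-1) < 0 := by
  rw [psi_neg_one]
  exact mul_neg_of_neg_of_pos (by norm_num) integral_sin_sq_div_sqrt_one_add_sin_sq_pos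

theorem exists_mem_Ioo_psi_eq_zero : ∃ m ∈ Set.Ioo (-1 : ℝ) 0, psi m = 0 :=
  intermediate_value_Ioo (by norm_num)
    (continuousOn_psi.mono fun _ hm => hm.2.trans_lt one_pos)
    ⟨psi_neg_one_neg, psi_zero ▸ pi_div_two_pos⟩

theorem stmt_7_general :
    (∀ m < 1, psi m = ∫ θ in (0 : ℝ)..(π / 2),
      (1 + m * (1 + 6 * sin θ ^ 2)) / √(1 - m * sin θ ^ 2)) ∧
    StrictMonoOn psi (Set.Iio 1) ∧
    psi 0 = π / 2 ∧
    psi (-1) = -6 * ∫ θ in (0 : ℝ)..(π / 2), sin θ ^ 2 / √(1 + sin θ ^ 2) ∧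
    psi (-1) < 0 ∧
    ∃ m₀ ∈ Set.Ioo (-1 : ℝ) 0, ∀ m < 1, psi m = 0 ↔ m = m₀ := by
  refine ⟨fun _ => psi_eq_integral, strictMonoOn_psi, psi_zero, psi_neg_one, psi_neg_one_neg, ?_⟩
  obtain ⟨m₀, hm₀, hzero⟩ := exists_mem_Ioo_psi_eq_zero
  refine ⟨m₀, hm₀, fun m hm => ?_⟩
  rw [← hzero, strictMonoOn_psi.eq_iff_eq hm (hm₀.2.trans one_pos)]

theorem stmt_7 :
    (∀ m ∈ Set.Ioc (-1 : ℝ) 0,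
      psi m = ∫ θ in (0:ℝ)..(π / 2),
        (1 + m * (1 + 6 * Real.sin θ ^ 2)) / Real.sqrt (1 - m * Real.sin θ ^ 2)) ∧
    StrictMonoOn psi (Set.Ioo (-1 : ℝ) 0) ∧
    psi 0 = π / 2 ∧ (0 : ℝ) < π / 2 ∧
    psi (-1) = -6 * ∫ θ in (0:ℝ)..(π / 2), Real.sin θ ^ 2 / Real.sqrt (1 + Real.sin θ ^ 2) ∧
    psi (-1) < 0 ∧
    (∃! m : ℝ, m ∈ Set.Ioo (-1 : ℝ) 0 ∧ psi m = 0) := by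
  obtain ⟨hint, hmono, hzero, hneg_one, hneg, m₀, hm₀, huniq⟩ := stmt_7_general
  exact ⟨fun m hm => hint m (hm.2.trans_lt one_pos), hmono.mono fun m hm => hm.2.trans one_pos,
    hzero, pi_div_two_pos, hneg_one, hneg, m₀, ⟨hm₀, (huniq m₀ (hm₀.2.trans one_pos)).mpr rfl⟩,
    fun m hm => (huniq m (hm.1.2.trans one_pos)).mp hm.2⟩
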